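/- Let f ∈ GR_D(Q0,ε) for some ε ∈ (0,2). Then for every t ∈ (0,1], (1/t)∫_0^t |f^*(u) − f^{**}(t)| du ≤ 2^n ε f^{**}(t). -/

import Mathlib

open MeasureTheory Set Real

noncomputable section

/-- The unit cube `Q₀ = [0,1]ⁿ` in `ℝⁿ`. -/
def Q0 (n : ℕ) : Set (Fin n → ℝ) := Set.Icc 0 1

/-- The integral average `f_Q = (1/|Q|) ∫_Q f` of `f` over `Q`. -/
def avgOn {n : ℕ} (f : (Fin n → ℝ) → ℝ) (Q : Set (Fin n → ℝ)) : ℝ :=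
  (volume Q).toReal⁻¹ * ∫ x in Q, f x

/-- The mean oscillation `Ω(f,Q) = (1/|Q|) ∫_Q |f - f_Q|` of `f` over `Q`. -/
def oscOn {n : ℕ} (f : (Fin n → ℝ) → ℝ) (Q : Set (Fin n → ℝ)) : ℝ :=
  (volume Q).toReal⁻¹ * ∫ x in Q, |f x - avgOn f Q|

/-- `Q` is a dyadic subcube of `[0,1]ⁿ` of side length `2⁻ᵏ`,
i.e. `Q = ∏ᵢ [mᵢ 2⁻ᵏ, (mᵢ+1) 2⁻ᵏ]` with `0 ≤ mᵢ < 2ᵏ`. -/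
def IsDyadicSide (n k : ℕ) (Q : Set (Fin n → ℝ)) : Prop :=
  ∃ m : Fin n → ℕ, (∀ i, m i < 2 ^ k) ∧
    Q = Set.Icc (fun i => (m i : ℝ) / 2 ^ k) (fun i => ((m i : ℝ) + 1) / 2 ^ k)

/-- `Q` belongs to the family `𝒟` of dyadic subcubes of `[0,1]ⁿ`. -/
def IsDyadic (n : ℕ) (Q : Set (Fin n → ℝ)) : Prop := ∃ k, IsDyadicSide n k Q

/-- One-dimensional integral average `g_J` over a set `J ⊆ ℝ`. -/
def avgI (g : ℝ → ℝ) (J : Set ℝ) : ℝ := (volume J).toReal⁻¹ * ∫ u in J, g u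

/-- One-dimensional mean oscillation `Ω(g,J)` over a set `J ⊆ ℝ`. -/
def oscI (g : ℝ → ℝ) (J : Set ℝ) : ℝ :=
  (volume J).toReal⁻¹ * ∫ u in J, |g u - avgI g J|

/-- `g : (0,1] → ℝ` is the nonincreasing, left-continuous rearrangement of
`f : [0,1]ⁿ → ℝ`, i.e. it is nonincreasing, left continuous and equimeasurable with `f`. -/
def IsRearrangement {n : ℕ} (f : (Fin n → ℝ) → ℝ) (g : ℝ → ℝ) : Prop :=
  AntitoneOn g (Set.Ioc 0 1) ∧
  (∀ t ∈ Set.Ioc (0:ℝ) 1, ContinuousWithinAt g (Set.Iio t) t) ∧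
  ∀ lam : ℝ, volume {t ∈ Set.Ioc (0:ℝ) 1 | lam < g t} = volume {x ∈ Q0 n | lam < f x}

/-- The Hardy average `F(t) = (1/t) ∫_0^t g(u) du`. -/
def hardyAvg (g : ℝ → ℝ) (t : ℝ) : ℝ := t⁻¹ * ∫ u in Set.Ioc (0:ℝ) t, g u

/-- The Gurov–Reshetnyak modulus
`v(f;σ) = sup { Ω(f,Q)/f_Q : Q ∈ 𝒟, ℓ(Q) ≤ σ, f_Q > 0 }` (equal to `0` if no such `Q` exists,
by the convention `sSup ∅ = 0` in `ℝ`). -/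
def vGR {n : ℕ} (f : (Fin n → ℝ) → ℝ) (σ : ℝ) : ℝ :=
  sSup {r : ℝ | ∃ k Q, IsDyadicSide n k Q ∧ ((2:ℝ) ^ k)⁻¹ ≤ σ ∧
    0 < avgOn f Q ∧ r = oscOn f Q / avgOn f Q}

/-- `f` satisfies the dyadic Gurov–Reshetnyak condition `f ∈ GR_𝒟(Q₀,ε)`:
`f : Q₀ → [0,∞)` is integrable and `Ω(f,Q) ≤ ε f_Q` for every dyadic cube `Q`. -/
def GRcond {n : ℕ} (f : (Fin n → ℝ) → ℝ) (ε : ℝ) : Prop :=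
  IntegrableOn f (Q0 n) ∧ (∀ x ∈ Q0 n, 0 ≤ f x) ∧
    ∀ Q, IsDyadic n Q → oscOn f Q ≤ ε * avgOn f Q

/-!
Write `a = f**(t)`. The integral of `|f* - a|` over `(0, t)` is twice that of `(f* - a)⁺`, so by
equimeasurability it is at most `2 ∫ (f - a)⁺` over `Q₀`. Consider the maximal dyadic cubes `Q`
having a child on which the average of `f` exceeds `a`. Outside them `f ≤ a` almost everywhere, by
Lebesgue differentiation. By maximality, and since `f_{Q₀} ≤ a`, each of them has average at most
`a`, so the Gurov–Reshetnyak condition bounds the integral of `(f - a)⁺` over `Q` by `ε a |Q| / 2`.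
Let `E` be the union of one such child of each `Q`; then `∑ |Q| = 2ⁿ |E|`. Unless `E` is empty,
`∫_E f > |E| f**(t)`; as `∫_E (f - f*(t)) ≤ ∫ (f - f*(t))⁺ = t (f**(t) - f*(t))`, this forces
`|E| < t`.
-/

open ProbabilityTheory Filter Topology Function

section Average

variable {X : Type*} [MeasurableSpace X] {μ : Measure X} [IsFiniteMeasure μ] {f : X → ℝ} {a : ℝ}

lemma integrable_posPart_sub_const (hf : Integrable f μ) (a : ℝ) :
    Integrable (fun x ↦ (f x - a)⁺) μ :=
  (hf.sub (integrable_const a)).pos_part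

lemma integral_abs_sub_average (hf : Integrable f μ) :
    ∫ x, |f x - ⨍ y, f y ∂μ| ∂μ = 2 * ∫ x, (f x - ⨍ y, f y ∂μ)⁺ ∂μ := by
  set c := ⨍ y, f y ∂μ
  have hfc : Integrable (fun x ↦ f x - c) μ := hf.sub (integrable_const c)
  have abs_eq (x : X) : |f x - c| = 2 * (f x - c)⁺ - (f x - c) := by
    rw [eq_sub_iff_add_eq, abs_add_eq_two_nsmul_posPart, two_nsmul, two_mul]
  simp_rw [abs_eq]
  rw [integral_sub ((integrable_posPart_sub_const hf c).const_mul 2) hfc, integral_sub_average,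
    integral_const_mul, sub_zero]

lemma average_posPart_sub_le_of_average_le (hf : Integrable f μ) (ha : ⨍ x, f x ∂μ ≤ a) :
    ⨍ x, (f x - a)⁺ ∂μ ≤ (⨍ x, |f x - ⨍ y, f y ∂μ| ∂μ) / 2 := by
  have excess_le : ∫ x, (f x - a)⁺ ∂μ ≤ ∫ x, (f x - ⨍ y, f y ∂μ)⁺ ∂μ :=
    integral_mono (integrable_posPart_sub_const hf _) (integrable_posPart_sub_const hf _)
      fun x ↦ posPart_mono (by gcongr)
  rw [average_eq, average_eq μ (fun x ↦ |f x - ⨍ y, f y ∂μ|), integral_abs_sub_average hf,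
    smul_eq_mul, smul_eq_mul, mul_div_assoc, mul_div_cancel_left₀ _ two_ne_zero]
  gcongr

end Average

section CountableUnion

variable {X κ : Type*} [MeasurableSpace X] {μ : Measure X} [Countable κ] {s t : κ → Set X}
  {f : X → ℝ} {a K : ℝ}

lemma hasSum_measureReal_iUnion (hs : ∀ i, MeasurableSet (s i)) (hd : Pairwise (Disjoint on s))
    (hfin : μ (⋃ i, s i) ≠ ⊤) : HasSum (fun i ↦ μ.real (s i)) (μ.real (⋃ i, s i)) := by
  simpa using hasSum_integral_iUnion hs hd (integrableOn_const hfin (C := (1 : ℝ)))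

lemma mul_measureReal_iUnion_lt_setIntegral [Nonempty κ] (hs : ∀ i, MeasurableSet (s i))
    (hd : Pairwise (Disjoint on s)) (hfin : μ (⋃ i, s i) ≠ ⊤) (hf : IntegrableOn f (⋃ i, s i) μ)
    (h : ∀ i, a * μ.real (s i) < ∫ x in s i, f x ∂μ) :
    a * μ.real (⋃ i, s i) < ∫ x in ⋃ i, s i, f x ∂μ :=
  hasSum_lt (fun i ↦ (h i).le) (h (Classical.arbitrary κ))
    ((hasSum_measureReal_iUnion hs hd hfin).mul_left a) (hasSum_integral_iUnion hs hd hf)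

lemma setIntegral_iUnion_le_mul_measureReal_iUnion (hs : ∀ i, MeasurableSet (s i))
    (ht : ∀ i, MeasurableSet (t i)) (hsd : Pairwise (Disjoint on s))
    (htd : Pairwise (Disjoint on t)) (hfin : μ (⋃ i, t i) ≠ ⊤) (hf : IntegrableOn f (⋃ i, s i) μ)
    (h : ∀ i, ∫ x in s i, f x ∂μ ≤ K * μ.real (t i)) :
    ∫ x in ⋃ i, s i, f x ∂μ ≤ K * μ.real (⋃ i, t i) :=
  hasSum_le h (hasSum_integral_iUnion hs hsd hf)
    ((hasSum_measureReal_iUnion ht htd hfin).mul_left K)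

end CountableUnion

section Rearrangement

lemma identDistrib_of_forall_measure_lt_eq {X Y : Type*} [MeasurableSpace X] [MeasurableSpace Y]
    {μ : Measure X} {ν : Measure Y} [IsProbabilityMeasure μ] [IsProbabilityMeasure ν]
    {f : X → ℝ} {g : Y → ℝ} (hf : AEMeasurable f μ) (hg : AEMeasurable g ν)
    (h : ∀ c, μ {x | c < f x} = ν {y | c < g y}) : IdentDistrib f g μ ν where
  aemeasurable_fst := hf
  aemeasurable_snd := hg
  map_eq := by
    have := Measure.isProbabilityMeasure_map hf
    have := Measure.isProbabilityMeasure_map hg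
    refine Measure.ext_of_Iic _ _ fun c ↦ ?_
    rw [← compl_Ioi, prob_compl_eq_one_sub measurableSet_Ioi,
      prob_compl_eq_one_sub measurableSet_Ioi,
      Measure.map_apply_of_aemeasurable hf measurableSet_Ioi,
      Measure.map_apply_of_aemeasurable hg measurableSet_Ioi]
    exact congrArg (1 - ·) (h c)

lemma setIntegral_posPart_sub_of_antitoneOn {g : ℝ → ℝ} {a b t : ℝ}
    (hg : AntitoneOn g (Ioc a b)) (ht : t ∈ Ioc a b) :
    ∫ u in Ioc a b, (g u - g t)⁺ = ∫ u in Ioc a t, (g u - g t) := by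
  have left_subset : Ioc a t ⊆ Ioc a b := Ioc_subset_Ioc_right ht.2
  calc ∫ u in Ioc a b, (g u - g t)⁺
      = ∫ u in Ioc a t, (g u - g t)⁺ := by
        refine setIntegral_eq_of_subset_of_forall_sdiff_eq_zero measurableSet_Ioc left_subset
          fun u ⟨hu, hut⟩ ↦ posPart_eq_zero.2 (sub_nonpos.2 (hg ht hu ?_))
        exact (not_le.1 fun h ↦ hut ⟨hu.1, h⟩).le
    _ = ∫ u in Ioc a t, (g u - g t) := setIntegral_congr_fun measurableSet_Ioc fun u hu ↦
        posPart_of_nonneg (sub_nonneg.2 (hg (left_subset hu) ht hu.2))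

lemma hardyAvg_eq_setAverage {t : ℝ} (ht : 0 ≤ t) (g : ℝ → ℝ) :
    hardyAvg g t = ⨍ u in Ioc 0 t, g u := by
  simp [hardyAvg, setAverage_eq, ht]

variable {X : Type*} [MeasurableSpace X] {μ : Measure X} {f : X → ℝ} {g : ℝ → ℝ} {t : ℝ}

lemma integral_posPart_sub_eq_of_identDistrib {Y : Type*} [MeasurableSpace Y] {ν : Measure Y}
    {g : Y → ℝ} (h : IdentDistrib f g μ ν) (a : ℝ) : ∫ x, (f x - a)⁺ ∂μ = ∫ y, (g y - a)⁺ ∂ν :=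
  (h.comp (u := fun y ↦ (y - a)⁺) (by fun_prop)).integral_eq

lemma integral_posPart_sub_apply_eq (h : IdentDistrib f g μ (volume.restrict (Ioc 0 1)))
    (hf : Integrable f μ) (hg : AntitoneOn g (Ioc 0 1)) (ht : t ∈ Ioc (0 : ℝ) 1) :
    ∫ x, (f x - g t)⁺ ∂μ = t * (hardyAvg g t - g t) := by
  have hgi : IntegrableOn g (Ioc 0 t) :=
    IntegrableOn.mono_set (h.integrable_iff.1 hf) (Ioc_subset_Ioc_right ht.2)
  calc ∫ x, (f x - g t)⁺ ∂μ
      = ∫ u in Ioc 0 1, (g u - g t)⁺ := integral_posPart_sub_eq_of_identDistrib h (g t)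
    _ = ∫ u in Ioc 0 t, (g u - g t) := setIntegral_posPart_sub_of_antitoneOn hg ht
    _ = t * (hardyAvg g t - g t) := by
        rw [integral_sub hgi (integrable_const _), hardyAvg, mul_sub,
          mul_inv_cancel_left₀ ht.1.ne']
        simp [ht.1.le]

lemma apply_le_hardyAvg (h : IdentDistrib f g μ (volume.restrict (Ioc 0 1)))
    (hf : Integrable f μ) (hg : AntitoneOn g (Ioc 0 1)) (ht : t ∈ Ioc (0 : ℝ) 1) :
    g t ≤ hardyAvg g t := by
  have excess_nonneg : 0 ≤ t * (hardyAvg g t - g t) :=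
    integral_posPart_sub_apply_eq h hf hg ht ▸ integral_nonneg fun _ ↦ posPart_nonneg _
  exact sub_nonneg.1 (nonneg_of_mul_nonneg_right excess_nonneg ht.1)

lemma measureReal_lt_of_hardyAvg_mul_lt [IsFiniteMeasure μ]
    (h : IdentDistrib f g μ (volume.restrict (Ioc 0 1)))
    (hf : Integrable f μ) (hg : AntitoneOn g (Ioc 0 1)) (ht : t ∈ Ioc (0 : ℝ) 1) {E : Set X}
    (hE : hardyAvg g t * μ.real E < ∫ x in E, f x ∂μ) : μ.real E < t := by
  have excess_le : ∫ x in E, (f x - g t) ∂μ ≤ t * (hardyAvg g t - g t) := by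
    have hpos := integrable_posPart_sub_const hf (g t)
    rw [← integral_posPart_sub_apply_eq h hf hg ht]
    calc ∫ x in E, (f x - g t) ∂μ
        ≤ ∫ x in E, (f x - g t)⁺ ∂μ :=
          integral_mono (hf.sub (integrable_const _)).integrableOn hpos.integrableOn
            fun x ↦ le_posPart _
      _ ≤ ∫ x, (f x - g t)⁺ ∂μ :=
          setIntegral_le_integral hpos (ae_of_all _ fun _ ↦ posPart_nonneg _)
  rw [integral_sub hf.integrableOn (integrable_const _), setIntegral_const, smul_eq_mul]
    at excess_le
  refine lt_of_mul_lt_mul_right ?_ (sub_nonneg.2 (apply_le_hardyAvg h hf hg ht))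
  linarith

lemma integral_le_hardyAvg [IsProbabilityMeasure μ]
    (h : IdentDistrib f g μ (volume.restrict (Ioc 0 1)))
    (hf : Integrable f μ) (hg : AntitoneOn g (Ioc 0 1)) (ht : t ∈ Ioc (0 : ℝ) 1) :
    ∫ x, f x ∂μ ≤ hardyAvg g t := by
  by_contra! hlt
  have : μ.real univ < t := measureReal_lt_of_hardyAvg_mul_lt h hf hg ht (by simpa using hlt)
  exact (this.trans_le ht.2).ne probReal_univ

lemma setIntegral_abs_sub_hardyAvg_le (h : IdentDistrib f g μ (volume.restrict (Ioc 0 1)))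
    (hf : Integrable f μ) (ht : t ∈ Ioc (0 : ℝ) 1) :
    ∫ u in Ioc 0 t, |g u - hardyAvg g t| ≤ 2 * ∫ x, (f x - hardyAvg g t)⁺ ∂μ := by
  have hgi : IntegrableOn g (Ioc 0 1) := h.integrable_iff.1 hf
  have left_subset : Ioc 0 t ⊆ Ioc 0 1 := Ioc_subset_Ioc_right ht.2
  calc ∫ u in Ioc 0 t, |g u - hardyAvg g t|
      = 2 * ∫ u in Ioc 0 t, (g u - hardyAvg g t)⁺ := by
        rw [hardyAvg_eq_setAverage ht.1.le, integral_abs_sub_average (hgi.mono_set left_subset)]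
    _ ≤ 2 * ∫ u in Ioc 0 1, (g u - hardyAvg g t)⁺ := by
        refine mul_le_mul_of_nonneg_left ?_ zero_le_two
        exact setIntegral_mono_set (integrable_posPart_sub_const hgi _)
          (ae_of_all _ fun _ ↦ posPart_nonneg _) left_subset.eventuallyLE
    _ = 2 * ∫ x, (f x - hardyAvg g t)⁺ ∂μ := by
        rw [integral_posPart_sub_eq_of_identDistrib h]

end Rearrangement

section DyadicCubes

variable {ι : Type*} {j k : ℕ} {ν : ι → ℤ} {x : ι → ℝ}

/-- The dyadic cube `∏ᵢ (νᵢ 2⁻ᵏ, (νᵢ + 1) 2⁻ᵏ]`. Cubes are taken half-open so that those of a given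
level `k` partition the space; the dyadic subcubes of the unit cube `dyadicCube 0 0` are those with
`ν / 2 ^ k = 0`, and `ν / 2 ^ (k - j)` is the index of the ancestor of level `j ≤ k`. -/
def dyadicCube (k : ℕ) (ν : ι → ℤ) : Set (ι → ℝ) := BoxIntegral.unitPartition.box (2 ^ k) ν

/-- The index of the dyadic cube of level `k` containing `x`. -/
def dyadicIndex (k : ℕ) (x : ι → ℝ) : ι → ℤ := BoxIntegral.unitPartition.index (2 ^ k) x

lemma mem_dyadicCube_iff_dyadicIndex_eq : x ∈ dyadicCube k ν ↔ dyadicIndex k x = ν :=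
  BoxIntegral.unitPartition.mem_box_iff_index

lemma mem_dyadicCube_dyadicIndex (k : ℕ) (x : ι → ℝ) : x ∈ dyadicCube k (dyadicIndex k x) :=
  mem_dyadicCube_iff_dyadicIndex_eq.2 rfl

lemma mem_dyadicCube_iff :
    x ∈ dyadicCube k ν ↔ ∀ i, (ν i : ℝ) < 2 ^ k * x i ∧ 2 ^ k * x i ≤ ν i + 1 := by
  have h := BoxIntegral.unitPartition.mem_box_iff' (n := 2 ^ k) (ν := ν) (x := x)
  push_cast at h
  exact h

lemma dyadicCube_add_subset (j d : ℕ) (ν : ι → ℤ) :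
    dyadicCube (j + d) ν ⊆ dyadicCube j (ν / 2 ^ d) := by
  intro x hx
  rw [mem_dyadicCube_iff] at hx ⊢
  intro i
  have hd : (0 : ℝ) < 2 ^ d := by positivity
  have index_lower : (((ν / 2 ^ d) i * 2 ^ d : ℤ) : ℝ) ≤ ν i :=
    Int.cast_le.2 (Int.ediv_mul_le (ν i) (pow_ne_zero d two_ne_zero))
  have index_upper : ((ν i + 1 : ℤ) : ℝ) ≤ (((ν / 2 ^ d) i + 1) * 2 ^ d : ℤ) :=
    Int.cast_le.2 (Int.lt_ediv_add_one_mul_self (ν i) (pow_pos two_pos d))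
  push_cast at index_lower index_upper
  obtain ⟨lower, upper⟩ := hx i
  rw [pow_add, mul_right_comm] at lower upper
  exact ⟨lt_of_mul_lt_mul_right (index_lower.trans_lt lower) hd.le,
    le_of_mul_le_mul_right (upper.trans index_upper) hd⟩

lemma dyadicCube_subset_ancestor (h : j ≤ k) (ν : ι → ℤ) :
    dyadicCube k ν ⊆ dyadicCube j (ν / 2 ^ (k - j)) := by
  simpa [h] using dyadicCube_add_subset j (k - j) ν

lemma dyadicIndex_div (h : j ≤ k) (x : ι → ℝ) :
    dyadicIndex k x / 2 ^ (k - j) = dyadicIndex j x :=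
  (mem_dyadicCube_iff_dyadicIndex_eq.1
    (dyadicCube_subset_ancestor h _ (mem_dyadicCube_dyadicIndex k x))).symm

lemma dyadicIndex_div_eq_zero (hx : x ∈ dyadicCube 0 0) (k : ℕ) : dyadicIndex k x / 2 ^ k = 0 := by
  simpa [mem_dyadicCube_iff_dyadicIndex_eq.1 hx] using dyadicIndex_div k.zero_le x

lemma dyadicCube_subset_unit (hν : ν / 2 ^ k = 0) : dyadicCube k ν ⊆ dyadicCube 0 0 := by
  simpa [hν] using dyadicCube_subset_ancestor k.zero_le ν

lemma dyadicCube_subset_Icc (k : ℕ) (ν : ι → ℤ) :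
    dyadicCube k ν ⊆ Icc (fun i ↦ (ν i : ℝ) / 2 ^ k) (fun i ↦ (ν i + 1 : ℝ) / 2 ^ k) := by
  simpa [BoxIntegral.Box.Icc_def] using!
    (BoxIntegral.unitPartition.box (2 ^ k) ν).coe_subset_Icc

lemma measurableSet_dyadicCube [Finite ι] (k : ℕ) (ν : ι → ℤ) : MeasurableSet (dyadicCube k ν) :=
  BoxIntegral.Box.measurableSet_coe _

variable [Fintype ι]

lemma measureReal_dyadicCube (k : ℕ) (ν : ι → ℤ) :
    volume.real (dyadicCube k ν) = ((2 ^ k) ^ Fintype.card ι)⁻¹ := by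
  simp [dyadicCube, measureReal_def]

lemma measureReal_dyadicCube_pos (k : ℕ) (ν : ι → ℤ) : 0 < volume.real (dyadicCube k ν) := by
  rw [measureReal_dyadicCube]
  positivity

lemma volume_dyadicCube_ne_top (k : ℕ) (ν : ι → ℤ) : volume (dyadicCube k ν) ≠ ⊤ :=
  ((BoxIntegral.unitPartition.box (2 ^ k) ν).measure_coe_lt_top volume).ne

instance isFiniteMeasure_restrict_dyadicCube (k : ℕ) (ν : ι → ℤ) :
    IsFiniteMeasure (volume.restrict (dyadicCube k ν)) :=
  isFiniteMeasure_restrict.2 (volume_dyadicCube_ne_top k ν)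

instance isProbabilityMeasure_restrict_unit :
    IsProbabilityMeasure (volume.restrict (dyadicCube 0 (0 : ι → ℤ))) :=
  isProbabilityMeasure_iff_real.2 (by simp [measureReal_dyadicCube])

lemma measureReal_dyadicCube_eq_mul_child (k : ℕ) (ν ν' : ι → ℤ) :
    volume.real (dyadicCube k ν) = 2 ^ Fintype.card ι * volume.real (dyadicCube (k + 1) ν') := by
  rw [measureReal_dyadicCube, measureReal_dyadicCube, pow_succ, mul_pow]
  field_simp

lemma dyadicCube_ae_eq_Icc (k : ℕ) (ν : ι → ℤ) :
    dyadicCube k ν =ᵐ[volume] Icc (fun i ↦ (ν i : ℝ) / 2 ^ k) (fun i ↦ (ν i + 1 : ℝ) / 2 ^ k) := by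
  simpa [BoxIntegral.Box.Icc_def] using!
    (BoxIntegral.unitPartition.box (2 ^ k) ν).coe_ae_eq_Icc

lemma Icc_dyadic_eq_closedBall (k : ℕ) (ν : ι → ℤ) :
    Icc (fun i ↦ (ν i : ℝ) / 2 ^ k) (fun i ↦ (ν i + 1 : ℝ) / 2 ^ k) =
      Metric.closedBall (fun i ↦ (ν i + 1 / 2 : ℝ) / 2 ^ k) (2 ^ (k + 1))⁻¹ := by
  rw [closedBall_pi _ (by positivity), ← pi_univ_Icc]
  congr! 2 with i
  rw [Real.closedBall_eq_Icc, pow_succ]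
  congr 1 <;> field_simp <;> ring

lemma ae_tendsto_setAverage_dyadicCube {f : (ι → ℝ) → ℝ} (hf : LocallyIntegrable f) :
    ∀ᵐ x, Tendsto (fun k ↦ ⨍ y in dyadicCube k (dyadicIndex k x), f y) atTop (𝓝 (f x)) := by
  have radius_tendsto : Tendsto (fun k : ℕ ↦ ((2 : ℝ) ^ (k + 1))⁻¹) atTop (𝓝[>] 0) :=
    tendsto_inv_atTop_nhdsGT_zero.comp
      ((tendsto_pow_atTop_atTop_of_one_lt one_lt_two).comp (tendsto_add_atTop_nat 1))
  filter_upwards [IsUnifLocDoublingMeasure.ae_tendsto_average volume hf 1] with x hx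
  simp_rw [setAverage_congr (dyadicCube_ae_eq_Icc _ _), Icc_dyadic_eq_closedBall]
  refine hx _ _ radius_tendsto (Eventually.of_forall fun k ↦ ?_)
  rw [one_mul, ← Icc_dyadic_eq_closedBall]
  exact dyadicCube_subset_Icc _ _ (mem_dyadicCube_dyadicIndex k x)

lemma ae_tendsto_setAverage_dyadicCube_of_integrableOn {f : (ι → ℝ) → ℝ}
    (hf : IntegrableOn f (dyadicCube 0 0)) :
    ∀ᵐ x, x ∈ dyadicCube 0 0 →
      Tendsto (fun k ↦ ⨍ y in dyadicCube k (dyadicIndex k x), f y) atTop (𝓝 (f x)) := by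
  have hF := (hf.integrable_indicator (measurableSet_dyadicCube 0 0)).locallyIntegrable
  filter_upwards [ae_tendsto_setAverage_dyadicCube hF] with x hx hx0
  rw [indicator_of_mem hx0] at hx
  refine hx.congr fun k ↦ setAverage_congr_fun (measurableSet_dyadicCube _ _)
    (ae_of_all _ fun y hy ↦
      indicator_of_mem (dyadicCube_subset_unit (dyadicIndex_div_eq_zero hx0 k) hy) f)

end DyadicCubes

section StoppingCubes

variable {ι : Type*} [Fintype ι] {f : (ι → ℝ) → ℝ} {a δ : ℝ} {k : ℕ} {ν : ι → ℤ} {x : ι → ℝ}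

/-- The dyadic cube of level `k` and index `ν` has a dyadic child on which `f` has average greater
than `a`. -/
def HasHeavyChild (f : (ι → ℝ) → ℝ) (a : ℝ) (k : ℕ) (ν : ι → ℤ) : Prop :=
  ∃ ν', ν' / 2 = ν ∧ a < ⨍ y in dyadicCube (k + 1) ν', f y

lemma HasHeavyChild.exists_child_mul_lt_setIntegral (h : HasHeavyChild f a k ν) :
    ∃ ν', dyadicCube (k + 1) ν' ⊆ dyadicCube k ν ∧
      a * volume.real (dyadicCube (k + 1) ν') < ∫ x in dyadicCube (k + 1) ν', f x := by
  obtain ⟨ν', rfl, hlt⟩ := h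
  refine ⟨ν', by simpa using dyadicCube_add_subset k 1 ν', ?_⟩
  rwa [setAverage_eq, smul_eq_mul, lt_inv_mul_iff₀' (measureReal_dyadicCube_pos _ _)] at hlt

/-- The (levels and indices of the) maximal dyadic subcubes of the unit cube that have a child on
which the average of `f` exceeds `a`: the parents of Calderón–Zygmund cubes, thinned out to be
disjoint. -/
def stoppingCubes (f : (ι → ℝ) → ℝ) (a : ℝ) : Set (ℕ × (ι → ℤ)) :=
  {p | p.2 / 2 ^ p.1 = 0 ∧ HasHeavyChild f a p.1 p.2 ∧
    ∀ j < p.1, ¬HasHeavyChild f a j (p.2 / 2 ^ (p.1 - j))}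

lemma pairwise_disjoint_stoppingCubes (f : (ι → ℝ) → ℝ) (a : ℝ) :
    Pairwise (Disjoint on fun p : stoppingCubes f a ↦ dyadicCube p.1.1 p.1.2) := by
  have level_le {p q : ℕ × (ι → ℤ)} (hp : p ∈ stoppingCubes f a) (hq : q ∈ stoppingCubes f a)
      {x : ι → ℝ} (hxp : x ∈ dyadicCube p.1 p.2) (hxq : x ∈ dyadicCube q.1 q.2) : q.1 ≤ p.1 := by
    by_contra! hlt
    rw [mem_dyadicCube_iff_dyadicIndex_eq] at hxp hxq
    have hancestor := hq.2.2 p.1 hlt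
    rw [← hxq, dyadicIndex_div hlt.le, hxp] at hancestor
    exact hancestor hp.2.1
  rintro ⟨p, hp⟩ ⟨q, hq⟩ hpq
  refine disjoint_left.2 fun x hxp hxq ↦ hpq (Subtype.ext ?_)
  have level_eq : p.1 = q.1 := (level_le hq hp hxq hxp).antisymm (level_le hp hq hxp hxq)
  rw [mem_dyadicCube_iff_dyadicIndex_eq] at hxp hxq
  exact Prod.ext level_eq (by rw [← hxp, ← hxq, level_eq])

lemma exists_mem_stoppingCubes (hx : x ∈ dyadicCube 0 0)
    (h : ∃ k, HasHeavyChild f a k (dyadicIndex k x)) :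
    ∃ p ∈ stoppingCubes f a, x ∈ dyadicCube p.1 p.2 := by
  classical
  refine ⟨(Nat.find h, dyadicIndex (Nat.find h) x),
    ⟨dyadicIndex_div_eq_zero hx _, Nat.find_spec h, fun j hj ↦ ?_⟩, mem_dyadicCube_dyadicIndex _ x⟩
  rw [dyadicIndex_div hj.le]
  exact Nat.find_min h hj

lemma setAverage_le_of_forall_not_hasHeavyChild (hunit : ⨍ x in dyadicCube 0 0, f x ≤ a)
    (hν : ν / 2 ^ k = 0) (h : ∀ j < k, ¬HasHeavyChild f a j (ν / 2 ^ (k - j))) :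
    ⨍ x in dyadicCube k ν, f x ≤ a := by
  cases k with
  | zero =>
    obtain rfl : ν = 0 := funext fun i ↦ by simpa using congrFun hν i
    exact hunit
  | succ k =>
    by_contra! hlt
    exact h k k.lt_succ_self ⟨ν, by simp, hlt⟩

lemma ae_le_of_notMem_stoppingCubes (hf : IntegrableOn f (dyadicCube 0 0))
    (hunit : ⨍ x in dyadicCube 0 0, f x ≤ a) :
    ∀ᵐ x, x ∈ dyadicCube 0 0 \ ⋃ p : stoppingCubes f a, dyadicCube p.1.1 p.1.2 → f x ≤ a := by
  filter_upwards [ae_tendsto_setAverage_dyadicCube_of_integrableOn hf] with x htendsto ⟨hx, hout⟩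
  refine le_of_tendsto' (htendsto hx) fun k ↦
    setAverage_le_of_forall_not_hasHeavyChild hunit (dyadicIndex_div_eq_zero hx k)
      fun j hj hheavy ↦ hout ?_
  rw [dyadicIndex_div hj.le] at hheavy
  obtain ⟨p, hp, hxp⟩ := exists_mem_stoppingCubes hx ⟨j, hheavy⟩
  exact mem_iUnion.2 ⟨⟨p, hp⟩, hxp⟩

lemma setIntegral_posPart_eq_stoppingCubes (hf : IntegrableOn f (dyadicCube 0 0))
    (hunit : ⨍ x in dyadicCube 0 0, f x ≤ a) :
    ∫ x in dyadicCube 0 0, (f x - a)⁺ =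
      ∫ x in ⋃ p : stoppingCubes f a, dyadicCube p.1.1 p.1.2, (f x - a)⁺ := by
  refine setIntegral_eq_of_subset_of_ae_sdiff_eq_zero
    (measurableSet_dyadicCube 0 0).nullMeasurableSet
    (iUnion_subset fun p ↦ dyadicCube_subset_unit p.2.1) ?_
  filter_upwards [ae_le_of_notMem_stoppingCubes hf hunit] with x hx hxout
  exact posPart_eq_zero.2 (sub_nonpos.2 (hx hxout))

lemma setIntegral_posPart_le_mul_measureReal_child (ν' : ι → ℤ)
    (h : ⨍ x in dyadicCube k ν, (f x - a)⁺ ≤ δ) :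
    ∫ x in dyadicCube k ν, (f x - a)⁺ ≤
      2 ^ Fintype.card ι * δ * volume.real (dyadicCube (k + 1) ν') := by
  rwa [setAverage_eq, smul_eq_mul, inv_mul_le_iff₀ (measureReal_dyadicCube_pos _ _),
    measureReal_dyadicCube_eq_mul_child k ν ν', mul_right_comm] at h

lemma exists_setIntegral_posPart_le (hf : IntegrableOn f (dyadicCube 0 0))
    (hunit : ⨍ x in dyadicCube 0 0, f x ≤ a)
    (hδ : ∀ k (ν : ι → ℤ), ν / 2 ^ k = 0 → ⨍ x in dyadicCube k ν, f x ≤ a →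
      ⨍ x in dyadicCube k ν, (f x - a)⁺ ≤ δ) :
    ∃ E ⊆ dyadicCube 0 0, (E = ∅ ∨ a * volume.real E < ∫ x in E, f x) ∧
      ∫ x in dyadicCube 0 0, (f x - a)⁺ ≤ 2 ^ Fintype.card ι * δ * volume.real E := by
  choose child child_subset child_heavy using fun p : stoppingCubes f a ↦
    p.2.2.1.exists_child_mul_lt_setIntegral
  let parentCube (p : stoppingCubes f a) := dyadicCube p.1.1 p.1.2
  let childCube (p : stoppingCubes f a) := dyadicCube (p.1.1 + 1) (child p)
  have parentCube_subset (p) : parentCube p ⊆ dyadicCube 0 0 := dyadicCube_subset_unit p.2.1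
  have parentCube_disjoint : Pairwise (Disjoint on parentCube) :=
    pairwise_disjoint_stoppingCubes f a
  have childCube_disjoint : Pairwise (Disjoint on childCube) :=
    parentCube_disjoint.mono fun p q h ↦ h.mono (child_subset p) (child_subset q)
  have excess_le (p) : ∫ x in parentCube p, (f x - a)⁺ ≤
      2 ^ Fintype.card ι * δ * volume.real (childCube p) :=
    setIntegral_posPart_le_mul_measureReal_child _ <|
      hδ _ _ p.2.1 (setAverage_le_of_forall_not_hasHeavyChild hunit p.2.1 p.2.2.2)
  have E_subset : ⋃ p, childCube p ⊆ dyadicCube 0 0 :=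
    iUnion_subset fun p ↦ (child_subset p).trans (parentCube_subset p)
  have E_ne_top : volume (⋃ p, childCube p) ≠ ⊤ :=
    measure_ne_top_of_subset E_subset (volume_dyadicCube_ne_top 0 0)
  refine ⟨⋃ p, childCube p, E_subset, ?_, ?_⟩
  · rcases isEmpty_or_nonempty (stoppingCubes f a) with _ | _
    · exact Or.inl (iUnion_of_empty _)
    · exact Or.inr (mul_measureReal_iUnion_lt_setIntegral (fun p ↦ measurableSet_dyadicCube _ _)
        childCube_disjoint E_ne_top (hf.mono_set E_subset) child_heavy)
  · rw [setIntegral_posPart_eq_stoppingCubes hf hunit]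
    exact setIntegral_iUnion_le_mul_measureReal_iUnion (fun p ↦ measurableSet_dyadicCube _ _)
      (fun p ↦ measurableSet_dyadicCube _ _) parentCube_disjoint childCube_disjoint E_ne_top
      (IntegrableOn.mono_set (integrable_posPart_sub_const hf a) (iUnion_subset parentCube_subset))
      excess_le

end StoppingCubes

section GurovReshetnyak

variable {n : ℕ} {f : (Fin n → ℝ) → ℝ} {ε a : ℝ} {k : ℕ} {ν : Fin n → ℤ}

lemma avgOn_eq_setAverage (f : (Fin n → ℝ) → ℝ) (Q : Set (Fin n → ℝ)) :
    avgOn f Q = ⨍ x in Q, f x :=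
  (setAverage_eq ..).symm

lemma oscOn_eq_setAverage (f : (Fin n → ℝ) → ℝ) (Q : Set (Fin n → ℝ)) :
    oscOn f Q = ⨍ x in Q, |f x - ⨍ y in Q, f y| := by
  rw [← avgOn_eq_setAverage, ← avgOn_eq_setAverage, avgOn, oscOn]

lemma unit_dyadicCube_ae_eq_Q0 (n : ℕ) : dyadicCube 0 0 =ᵐ[volume] Q0 n := by
  simpa [Q0, Pi.zero_def, Pi.one_def] using dyadicCube_ae_eq_Icc 0 (0 : Fin n → ℤ)

lemma isDyadic_Icc_of_div_eq_zero (hν : ν / 2 ^ k = 0) :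
    IsDyadic n (Icc (fun i ↦ (ν i : ℝ) / 2 ^ k) (fun i ↦ (ν i + 1 : ℝ) / 2 ^ k)) := by
  have index_bounds (i) : 0 ≤ ν i ∧ ν i < 2 ^ k := by
    simpa using (Int.ediv_eq_iff_of_pos (pow_pos two_pos k)).1 (congrFun hν i)
  lift ν to Fin n → ℕ using fun i ↦ (index_bounds i).1
  beta_reduce at index_bounds
  exact ⟨k, ν, fun i ↦ by exact_mod_cast (index_bounds i).2, by simp⟩

lemma setAverage_abs_sub_setAverage_dyadicCube_le (hf : GRcond f ε) (hν : ν / 2 ^ k = 0) :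
    ⨍ x in dyadicCube k ν, |f x - ⨍ y in dyadicCube k ν, f y| ≤
      ε * ⨍ x in dyadicCube k ν, f x := by
  have h := hf.2.2 _ (isDyadic_Icc_of_div_eq_zero hν)
  rw [oscOn_eq_setAverage, avgOn_eq_setAverage] at h
  simpa only [setAverage_congr (dyadicCube_ae_eq_Icc k ν)] using h

lemma integrableOn_unit_of_GRcond (hf : GRcond f ε) : IntegrableOn f (dyadicCube 0 0) :=
  hf.1.congr_set_ae (unit_dyadicCube_ae_eq_Q0 n)

lemma setAverage_posPart_sub_dyadicCube_le (hf : GRcond f ε) (hε : 0 ≤ ε) (hν : ν / 2 ^ k = 0)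
    (ha : ⨍ x in dyadicCube k ν, f x ≤ a) :
    ⨍ x in dyadicCube k ν, (f x - a)⁺ ≤ ε * a / 2 :=
  calc ⨍ x in dyadicCube k ν, (f x - a)⁺
      ≤ (⨍ x in dyadicCube k ν, |f x - ⨍ y in dyadicCube k ν, f y|) / 2 :=
        average_posPart_sub_le_of_average_le
          ((integrableOn_unit_of_GRcond hf).mono_set (dyadicCube_subset_unit hν)) ha
    _ ≤ (ε * ⨍ x in dyadicCube k ν, f x) / 2 := by
        gcongr
        exact setAverage_abs_sub_setAverage_dyadicCube_le hf hν
    _ ≤ ε * a / 2 := by gcongr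

lemma identDistrib_of_isRearrangement {g : ℝ → ℝ} (hf : AEMeasurable f (volume.restrict (Q0 n)))
    (hf0 : ∀ x ∈ Q0 n, 0 ≤ f x) (hg : IsRearrangement (fun x ↦ |f x|) g) :
    IdentDistrib f g (volume.restrict (dyadicCube 0 0)) (volume.restrict (Ioc 0 1)) := by
  have : IsProbabilityMeasure (volume.restrict (Ioc (0 : ℝ) 1)) := ⟨by simp⟩
  have restrict_eq := Measure.restrict_congr_set (unit_dyadicCube_ae_eq_Q0 n)
  have hQ : MeasurableSet (Q0 n) := measurableSet_Icc
  have abs_ae_eq : f =ᵐ[volume.restrict (Q0 n)] fun x ↦ |f x| :=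
    (ae_restrict_mem hQ).mono fun x hx ↦ (abs_of_nonneg (hf0 x hx)).symm
  have hg_meas : AEMeasurable g (volume.restrict (Ioc 0 1)) :=
    aemeasurable_restrict_of_antitoneOn measurableSet_Ioc hg.1
  rw [← restrict_eq] at hf abs_ae_eq
  refine (IdentDistrib.of_ae_eq hf abs_ae_eq).trans
    (identDistrib_of_forall_measure_lt_eq (hf.congr abs_ae_eq) hg_meas fun c ↦ ?_)
  rw [restrict_eq, Measure.restrict_apply' hQ,
    Measure.restrict_apply' measurableSet_Ioc, inter_comm, inter_comm _ (Ioc 0 1)]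
  exact (hg.2.2 c).symm

lemma setIntegral_posPart_sub_hardyAvg_le (hf : GRcond f ε) (hε : 0 ≤ ε) {g : ℝ → ℝ}
    (hg : IsRearrangement (fun x ↦ |f x|) g) {t : ℝ} (ht : t ∈ Ioc (0 : ℝ) 1) :
    ∫ x in dyadicCube 0 0, (f x - hardyAvg g t)⁺ ≤ 2 ^ n * (ε * hardyAvg g t / 2) * t := by
  have hfi := integrableOn_unit_of_GRcond hf
  have hident := identDistrib_of_isRearrangement hf.1.aemeasurable hf.2.1 hg
  have integral_le := integral_le_hardyAvg hident hfi hg.1 ht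
  have hardyAvg_nonneg : 0 ≤ hardyAvg g t := by
    rw [setIntegral_congr_set (unit_dyadicCube_ae_eq_Q0 n)] at integral_le
    exact (setIntegral_nonneg measurableSet_Icc hf.2.1).trans integral_le
  obtain ⟨E, E_subset, E_heavy, excess_le⟩ := exists_setIntegral_posPart_le hfi
    ((average_eq_integral _ _).trans_le integral_le)
    fun k ν hν ↦ setAverage_posPart_sub_dyadicCube_le hf hε hν
  have restrict_real_E : (volume.restrict (dyadicCube 0 0)).real E = volume.real E := by
    rw [measureReal_def, Measure.restrict_eq_self _ E_subset, measureReal_def]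
  have E_measure_le : volume.real E ≤ t := by
    rcases E_heavy with rfl | E_heavy
    · simpa using ht.1.le
    · rw [← Measure.restrict_restrict_of_subset E_subset, ← restrict_real_E] at E_heavy
      exact restrict_real_E ▸ (measureReal_lt_of_hardyAvg_mul_lt hident hfi hg.1 ht E_heavy).le
  rw [Fintype.card_fin] at excess_le
  exact excess_le.trans (by gcongr)

end GurovReshetnyak

/-- If `f ∈ GR_𝒟(Q₀,ε)` with `ε ∈ (0,2)`, then for every `t ∈ (0,1]`,
`(1/t) ∫_0^t |f*(u) − f**(t)| du ≤ 2ⁿ ε f**(t)`. -/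
theorem GR_oscillation_bound (n : ℕ) (hn : 1 ≤ n)
    (ε : ℝ) (hε : ε ∈ Set.Ioo (0:ℝ) 2)
    (f : (Fin n → ℝ) → ℝ) (hf : GRcond f ε)
    (fstar : ℝ → ℝ) (hfs : IsRearrangement (fun x => |f x|) fstar) :
    ∀ t ∈ Set.Ioc (0:ℝ) 1,
      t⁻¹ * ∫ u in Set.Ioc (0:ℝ) t, |fstar u - hardyAvg fstar t| ≤
        2 ^ n * ε * hardyAvg fstar t := by
  intro t ht
  have hident := identDistrib_of_isRearrangement hf.1.aemeasurable hf.2.1 hfs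
  have oscillation_le := setIntegral_abs_sub_hardyAvg_le hident (integrableOn_unit_of_GRcond hf) ht
  have excess_le := setIntegral_posPart_sub_hardyAvg_le hf hε.1.le hfs ht
  rw [inv_mul_le_iff₀ ht.1]
  linarith
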